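/- Let V : ℝ^d → ℝ be differentiable with L-Lipschitz gradient (L-smooth), let μ > 0, and define the smoothed function V_μ(θ) = E_{v' ∼ Unif(B^d)} [V(θ + μ v')], where Unif(B^d) is the uniform probability measure on the closed unit Euclidean ball of ℝ^d. Then V_μ is differentiable with L-Lipschitz gradient, and for every θ ∈ ℝ^d, ∇V_μ(θ) = E_{v ∼ Unif(S^{d−1})} [ (d/μ)·(V(θ + μ v) − V(θ))·v ], where Unif(S^{d−1}) is the uniform probability measure on the unit Euclidean sphere of ℝ^d. -/

import Mathlib

open MeasureTheory

noncomputable section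

/-- The uniform probability measure on the closed unit Euclidean ball of `ℝ^d`. -/
def ballUniform (d : ℕ) : Measure (EuclideanSpace ℝ (Fin d)) :=
  (volume (Metric.closedBall (0 : EuclideanSpace ℝ (Fin d)) 1))⁻¹ •
    volume.restrict (Metric.closedBall (0 : EuclideanSpace ℝ (Fin d)) 1)

/-- The uniform probability measure on the unit Euclidean sphere of `ℝ^d`,
viewed as a measure on `ℝ^d` (the normalized surface measure). -/
def sphereUniform (d : ℕ) : Measure (EuclideanSpace ℝ (Fin d)) :=
  ((volume : Measure (EuclideanSpace ℝ (Fin d))).toSphere Set.univ)⁻¹ •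
    Measure.map Subtype.val (volume : Measure (EuclideanSpace ℝ (Fin d))).toSphere

/-- The randomized smoothing `V_μ(θ) = E_{v' ∼ Unif(B^d)}[V(θ + μ v')]` of `V`. -/
def smoothed (d : ℕ) (V : EuclideanSpace ℝ (Fin d) → ℝ) (μ : ℝ)
    (θ : EuclideanSpace ℝ (Fin d)) : ℝ :=
  ∫ v, V (θ + μ • v) ∂(ballUniform d)

/-!
After differentiating under the integral, `∇V_μ(θ)` is the average of `∇V` over the ball of
radius `μ` about `θ`, and the divergence theorem turns it into an average of `V` times the unit
normal over the sphere; the constant `V θ` may be subtracted because a constant has zero gradient.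

The divergence theorem on balls about the origin is obtained from integration by parts on the whole
space against `max 0 (R² - ‖x‖²)²`, where the square makes the cutoff `C¹`. In polar coordinates
this reads, for all `R > 0`,
`∫₀ᴿ (R² - r²)² a(r) dr = 4 ∫₀ᴿ (R² - r²) r b(r) dr`,
where `a` and `b` are the integrals of `∂ₑf` and of `f` times the `e`-component of the unit normal
over the sphere of radius `r`. One further integration by parts, with `A(r) = ∫₀ʳ a`, gives
`∫₀ᴿ (R² - r²) r (A(r) - b(r)) dr = 0`, and two differentiations in `R` yield `A = b`.
-/

open scoped Gradient RealInnerProductSpace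

section OneVariable

theorem hasDerivAt_max_zero_sq (t : ℝ) :
    HasDerivAt (fun s : ℝ => max 0 s ^ 2) (2 * max 0 t) t := by
  have hcont : Continuous fun s : ℝ => max 0 s ^ 2 := by fun_prop
  have hcont' : Continuous fun s : ℝ => 2 * max 0 s := by fun_prop
  refine hasDerivAt_of_hasDerivAt_of_ne' (g := fun s => 2 * max 0 s) (x := 0) (fun s hs => ?_)
    hcont.continuousAt hcont'.continuousAt t
  rcases hs.lt_or_gt with hneg | hpos
  · rw [max_eq_left hneg.le, mul_zero]
    refine (hasDerivAt_const s 0).congr_of_eventuallyEq ?_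
    filter_upwards [gt_mem_nhds hneg] with x hx
    simp [max_eq_left hx.le]
  · rw [max_eq_right hpos.le]
    refine HasDerivAt.congr_of_eventuallyEq (by simpa using hasDerivAt_pow 2 s) ?_
    filter_upwards [lt_mem_nhds hpos] with x hx
    rw [max_eq_right hx.le]

theorem eqOn_zero_of_integral_sub_sq_mul_eq_zero {c : ℝ → ℝ} (hc : Continuous c)
    (h : ∀ R > 0, ∫ r in (0 : ℝ)..R, (R ^ 2 - r ^ 2) * c r = 0) :
    Set.EqOn c 0 (Set.Ioi 0) := by
  have hasDerivAt_primitive {g : ℝ → ℝ} (hg : Continuous g) (R : ℝ) :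
      HasDerivAt (fun s => ∫ r in (0 : ℝ)..s, g r) (g R) R :=
    (hg.integral_hasStrictDerivAt 0 R).hasDerivAt
  have deriv_eq_zero {F : ℝ → ℝ} {F' R : ℝ} (hF : ∀ s > 0, F s = 0) (hR : 0 < R)
      (hF' : HasDerivAt F F' R) : F' = 0 :=
    hF'.unique <| (hasDerivAt_const R 0).congr_of_eventuallyEq <|
      (lt_mem_nhds hR).mono hF
  have h_expand (R : ℝ) (hR : 0 < R) :
      R ^ 2 * (∫ r in (0 : ℝ)..R, c r) - ∫ r in (0 : ℝ)..R, r ^ 2 * c r = 0 := by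
    have hsub := h R hR
    simp only [sub_mul] at hsub
    rwa [intervalIntegral.integral_sub (Continuous.intervalIntegrable (by fun_prop) _ _)
      (Continuous.intervalIntegrable (by fun_prop) _ _),
      intervalIntegral.integral_const_mul] at hsub
  have h_primitive (R : ℝ) (hR : 0 < R) : ∫ r in (0 : ℝ)..R, c r = 0 := by
    have hderiv := ((hasDerivAt_pow 2 R).mul (hasDerivAt_primitive hc R)).sub
      (hasDerivAt_primitive (g := fun r => r ^ 2 * c r) (by fun_prop) R)
    have hsum := deriv_eq_zero h_expand hR hderiv
    have hprod : 2 * R * ∫ r in (0 : ℝ)..R, c r = 0 := by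
      simpa using hsum
    exact (mul_eq_zero.mp hprod).resolve_left (by positivity)
  exact fun R hR => deriv_eq_zero h_primitive hR (hasDerivAt_primitive hc R)

theorem integral_sub_sq_sq_mul {a : ℝ → ℝ} (ha : Continuous a) (R : ℝ) :
    ∫ r in (0 : ℝ)..R, (R ^ 2 - r ^ 2) ^ 2 * a r =
      4 * ∫ r in (0 : ℝ)..R, (R ^ 2 - r ^ 2) * (r * ∫ s in (0 : ℝ)..r, a s) := by
  have hweight (r : ℝ) :
      HasDerivAt (fun r => (R ^ 2 - r ^ 2) ^ 2) (-4 * (R ^ 2 - r ^ 2) * r) r := by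
    refine (((hasDerivAt_pow 2 r).const_sub (R ^ 2)).pow 2).congr_deriv ?_
    norm_num
    ring
  have hparts := intervalIntegral.integral_mul_deriv_eq_deriv_mul (a := 0) (b := R)
    (fun r _ => hweight r) (fun r _ => (ha.integral_hasStrictDerivAt 0 r).hasDerivAt)
    (Continuous.intervalIntegrable (by fun_prop) _ _) (ha.intervalIntegrable _ _)
  simp only [mul_assoc, intervalIntegral.integral_const_mul] at hparts
  simpa using hparts

theorem integral_eq_of_integral_sub_sq_sq_mul_eq {a b : ℝ → ℝ}
    (ha : Continuous a) (hb : Continuous b)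
    (h : ∀ R > 0, ∫ r in (0 : ℝ)..R, (R ^ 2 - r ^ 2) ^ 2 * a r =
      4 * ∫ r in (0 : ℝ)..R, (R ^ 2 - r ^ 2) * (r * b r)) {R : ℝ} (hR : 0 < R) :
    ∫ r in (0 : ℝ)..R, a r = b R := by
  have hprim : Continuous fun r => ∫ s in (0 : ℝ)..r, a s :=
    intervalIntegral.continuous_primitive (fun _ _ => ha.intervalIntegrable _ _) 0
  have hzero : Set.EqOn (fun r => r * (∫ s in (0 : ℝ)..r, a s) - r * b r) 0 (Set.Ioi 0) := by
    refine eqOn_zero_of_integral_sub_sq_mul_eq_zero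
      ((continuous_id.mul hprim).sub (continuous_id.mul hb)) fun S hS => ?_
    simp only [mul_sub]
    rw [intervalIntegral.integral_sub (Continuous.intervalIntegrable (by fun_prop) _ _)
      (Continuous.intervalIntegrable (by fun_prop) _ _)]
    linarith [h S hS, integral_sub_sq_sq_mul ha S]
  exact mul_left_cancel₀ hR.ne' (sub_eq_zero.mp (hzero hR))

end OneVariable

section PolarCoordinates

variable {E F : Type*} [NormedAddCommGroup E] [NormedSpace ℝ E] [FiniteDimensional ℝ E]
  [MeasurableSpace E] [BorelSpace E] [NormedAddCommGroup F] [NormedSpace ℝ F]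
  (ν : Measure E) [ν.IsAddHaarMeasure]

theorem integral_eq_integral_Ioi_integral_sphere [Nontrivial E] {f : E → F}
    (hf : Integrable f ν) :
    ∫ x, f x ∂ν = ∫ r in Set.Ioi (0 : ℝ), r ^ (Module.finrank ℝ E - 1) •
      ∫ w : Metric.sphere (0 : E) 1, f (r • (w : E)) ∂ν.toSphere := by
  set n := Module.finrank ℝ E - 1
  let g : Metric.sphere (0 : E) 1 × Set.Ioi (0 : ℝ) → F := fun p => f (p.2.1 • p.1.1)
  have hpolar := ν.measurePreserving_homeomorphUnitSphereProd
  have hemb := (homeomorphUnitSphereProd E).measurableEmbedding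
  have hfg : (fun x : ({0}ᶜ : Set E) => f x) = g ∘ homeomorphUnitSphereProd E := by
    ext x
    have hx : ‖(x : E)‖ ≠ 0 := norm_ne_zero_iff.mpr x.2
    simp [g, smul_smul, hx]
  have hg : Integrable g (ν.toSphere.prod (.volumeIoiPow n)) := by
    rw [← hpolar.integrable_comp_emb hemb, ← hfg]
    exact (integrableOn_iff_comap_subtypeVal (measurableSet_singleton _).compl).mp
      hf.integrableOn
  calc ∫ x, f x ∂ν
      = ∫ x : ({0}ᶜ : Set E), f x ∂ν.comap (↑) := by
        rw [integral_subtype_comap (measurableSet_singleton _).compl f,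
          restrict_compl_singleton]
    _ = ∫ p, g p ∂ν.toSphere.prod (.volumeIoiPow n) := by
        rw [hfg]
        exact hpolar.integral_comp hemb g
    _ = ∫ r, ∫ w, g (w, r) ∂ν.toSphere ∂.volumeIoiPow n := integral_prod_symm _ hg
    _ = ∫ r in Set.Ioi (0 : ℝ), r ^ n • ∫ w : Metric.sphere (0 : E) 1,
          f (r • (w : E)) ∂ν.toSphere := by
        simp only [Measure.volumeIoiPow, ENNReal.ofReal]
        rw [integral_withDensity_eq_integral_smul
            (measurable_subtype_coe.pow_const _).real_toNNReal,
          integral_subtype_comap measurableSet_Ioi fun r => Real.toNNReal (r ^ n) •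
            ∫ w : Metric.sphere (0 : E) 1, f (r • (w : E)) ∂ν.toSphere]
        refine setIntegral_congr_fun measurableSet_Ioi fun r hr => ?_
        simp only [NNReal.smul_def, Real.coe_toNNReal _ (pow_nonneg hr.out.le _)]

theorem setIntegral_ball_eq_integral_integral_sphere [Nontrivial E] {f : E → F} {R : ℝ}
    (hR : 0 ≤ R) (hf : IntegrableOn f (Metric.ball 0 R) ν) :
    ∫ x in Metric.ball 0 R, f x ∂ν = ∫ r in (0 : ℝ)..R, r ^ (Module.finrank ℝ E - 1) •
      ∫ w : Metric.sphere (0 : E) 1, f (r • (w : E)) ∂ν.toSphere := by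
  rw [← integral_indicator measurableSet_ball, integral_eq_integral_Ioi_integral_sphere ν
      (hf.integrable_indicator measurableSet_ball),
    intervalIntegral.integral_of_le hR, integral_Ioc_eq_integral_Ioo, ← Set.Ioi_inter_Iio,
    ← setIntegral_indicator measurableSet_Iio]
  refine setIntegral_congr_fun measurableSet_Ioi fun r (hr : 0 < r) => ?_
  by_cases hrR : r < R <;> simp [Set.indicator, norm_smul, abs_of_pos hr, hrR]

theorem continuous_integral_toSphere_of_continuous {X : Type*} [TopologicalSpace X]
    [FirstCountableTopology X] [LocallyCompactSpace X] {f : X → E → F}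
    (hf : Continuous (Function.uncurry f)) :
    Continuous fun r => ∫ w : Metric.sphere (0 : E) 1, f r w ∂ν.toSphere := by
  have : CompactSpace (Metric.sphere (0 : E) 1) :=
    isCompact_iff_compactSpace.mp (isCompact_sphere 0 1)
  simpa only [Measure.restrict_univ] using
    continuous_parametric_integral_of_continuous (μ := ν.toSphere)
      (f := fun r (w : Metric.sphere (0 : E) 1) => f r w)
      (hf.comp (by fun_prop : Continuous fun p : X × Metric.sphere (0 : E) 1 =>
        (p.1, (p.2 : E)))) isCompact_univ

end PolarCoordinates

section RadialCutoff

variable {E : Type*} [NormedAddCommGroup E] [MeasurableSpace E] [OpensMeasurableSpace E]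
  (ν : Measure E)

theorem setIntegral_ball_sub_norm_sq_pow_mul {R : ℝ} (hR : 0 ≤ R) {k : ℕ} (hk : k ≠ 0)
    (g : E → ℝ) :
    ∫ x in Metric.ball 0 R, (R ^ 2 - ‖x‖ ^ 2) ^ k * g x ∂ν =
      ∫ x, max 0 (R ^ 2 - ‖x‖ ^ 2) ^ k * g x ∂ν := by
  rw [← integral_indicator measurableSet_ball]
  congr 1
  ext x
  by_cases hx : ‖x‖ < R
  · have : 0 ≤ R ^ 2 - ‖x‖ ^ 2 := by nlinarith [norm_nonneg x]
    simp [hx, this]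
  · have : R ^ 2 - ‖x‖ ^ 2 ≤ 0 := by nlinarith
    simp [hx, this, hk]

theorem integrable_max_zero_sub_norm_sq_pow_mul [ProperSpace E] [IsFiniteMeasureOnCompacts ν]
    (R : ℝ) {k : ℕ} (hk : k ≠ 0) {g : E → ℝ} (hg : Continuous g) :
    Integrable (fun x => max 0 (R ^ 2 - ‖x‖ ^ 2) ^ k * g x) ν := by
  refine Continuous.integrable_of_hasCompactSupport (by fun_prop) <|
    HasCompactSupport.intro (isCompact_closedBall (0 : E) |R|) fun x hx => ?_
  have : R ^ 2 - ‖x‖ ^ 2 ≤ 0 := by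
    rw [mem_closedBall_zero_iff, not_le] at hx
    nlinarith [sq_abs R, abs_nonneg R]
  simp [this, hk]

end RadialCutoff

section Gradient

variable {E : Type*} [NormedAddCommGroup E] [InnerProductSpace ℝ E] [CompleteSpace E]

theorem contDiff_one_iff_continuous_gradient {f : E → ℝ} :
    ContDiff ℝ 1 f ↔ Differentiable ℝ f ∧ Continuous (∇ f) := by
  rw [contDiff_one_iff_fderiv, ← toDual_comp_gradient]
  exact and_congr_right fun _ =>
    (InnerProductSpace.toDual ℝ E).toHomeomorph.comp_continuous_iff

theorem gradient_comp_const_add_smul (f : E → ℝ) (x : E) (t : ℝ) (v : E) :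
    ∇ (fun v => f (x + t • v)) v = t • ∇ f (x + t • v) := by
  have hscale := fderiv_comp_smul (𝕜 := ℝ) (f := fun u => f (x + u)) (x := v) t
  rw [fderiv_comp_add_left] at hscale
  rw [gradient, hscale, map_smul, gradient]

end Gradient

section DivergenceTheorem

variable {E : Type*} [NormedAddCommGroup E] [InnerProductSpace ℝ E]

theorem fderiv_max_zero_sub_norm_sq_sq_apply (R : ℝ) (x e : E) :
    fderiv ℝ (fun x : E => max 0 (R ^ 2 - ‖x‖ ^ 2) ^ 2) x e =
      -(4 * (max 0 (R ^ 2 - ‖x‖ ^ 2) * ⟪x, e⟫)) := by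
  have hinner : HasFDerivAt (fun x : E => R ^ 2 - ‖x‖ ^ 2) (-(2 • innerSL ℝ x)) x :=
    (hasStrictFDerivAt_norm_sq x).hasFDerivAt.const_sub (R ^ 2)
  have hcomp := (hasDerivAt_max_zero_sq (R ^ 2 - ‖x‖ ^ 2)).comp_hasFDerivAt x hinner
  rw [show fderiv ℝ (fun x : E => max 0 (R ^ 2 - ‖x‖ ^ 2) ^ 2) x = _ from hcomp.fderiv]
  simp only [smul_neg, neg_apply, smul_apply,
    innerSL_apply_apply, smul_eq_mul, nsmul_eq_mul]
  push_cast
  ring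

variable [FiniteDimensional ℝ E] [MeasurableSpace E] [BorelSpace E]
  (ν : Measure E) [ν.IsAddHaarMeasure]

theorem setIntegral_ball_sub_norm_sq_sq_mul_fderiv {f : E → ℝ} (hf : ContDiff ℝ 1 f) (e : E)
    {R : ℝ} (hR : 0 ≤ R) :
    ∫ x in Metric.ball 0 R, (R ^ 2 - ‖x‖ ^ 2) ^ 2 * fderiv ℝ f x e ∂ν =
      4 * ∫ x in Metric.ball 0 R, (R ^ 2 - ‖x‖ ^ 2) * (f x * ⟪x, e⟫) ∂ν := by
  have hf' : Continuous fun x => fderiv ℝ f x e :=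
    (hf.continuous_fderiv one_ne_zero).clm_apply continuous_const
  have hcutoff : Differentiable ℝ fun x : E => max 0 (R ^ 2 - ‖x‖ ^ 2) ^ 2 := fun x =>
    (hasDerivAt_max_zero_sq _).differentiableAt.comp x
      ((hasStrictFDerivAt_norm_sq x).differentiableAt.const_sub (R ^ 2))
  have hderiv (x : E) : fderiv ℝ (fun x : E => max 0 (R ^ 2 - ‖x‖ ^ 2) ^ 2) x e * f x =
      -4 * (max 0 (R ^ 2 - ‖x‖ ^ 2) ^ 1 * (f x * ⟪x, e⟫)) := by
    rw [fderiv_max_zero_sub_norm_sq_sq_apply]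
    ring
  have hparts := integral_mul_fderiv_eq_neg_fderiv_mul_of_integrable (μ := ν)
    (f := fun x : E => max 0 (R ^ 2 - ‖x‖ ^ 2) ^ 2) (g := f) (v := e)
    (by
      simp only [hderiv]
      exact (integrable_max_zero_sub_norm_sq_pow_mul ν R one_ne_zero
        (by fun_prop)).const_mul (-4))
    (integrable_max_zero_sub_norm_sq_pow_mul ν R two_ne_zero hf')
    (integrable_max_zero_sub_norm_sq_pow_mul ν R two_ne_zero hf.continuous)
    (fun x _ => hcutoff x) (fun x _ => hf.differentiable one_ne_zero x)
  have hball := setIntegral_ball_sub_norm_sq_pow_mul ν hR one_ne_zero fun x => f x * ⟪x, e⟫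
  simp only [pow_one] at hball
  rw [setIntegral_ball_sub_norm_sq_pow_mul ν hR two_ne_zero, hparts, hball]
  simp only [hderiv, integral_const_mul, pow_one]
  ring

theorem setIntegral_ball_fderiv_eq_integral_sphere {f : E → ℝ} (hf : ContDiff ℝ 1 f) (e : E)
    {R : ℝ} (hR : 0 < R) :
    ∫ x in Metric.ball 0 R, fderiv ℝ f x e ∂ν = R ^ (Module.finrank ℝ E - 1) *
      ∫ w : Metric.sphere (0 : E) 1, f (R • (w : E)) * ⟪(w : E), e⟫ ∂ν.toSphere := by
  rcases subsingleton_or_nontrivial E with hE | hE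
  · simp [Subsingleton.elim e 0]
  have hfc := hf.continuous
  have hf' : Continuous fun x => fderiv ℝ f x e :=
    (hf.continuous_fderiv one_ne_zero).clm_apply continuous_const
  have integrableOn_ball {g : E → ℝ} (hg : Continuous g) (S : ℝ) :
      IntegrableOn g (Metric.ball 0 S) ν :=
    (hg.continuousOn.integrableOn_compact (isCompact_closedBall 0 S)).mono_set
      Metric.ball_subset_closedBall
  set n := Module.finrank ℝ E - 1 with hn
  have hflux : Continuous fun r : ℝ => ∫ w : Metric.sphere (0 : E) 1,
      f (r • (w : E)) * ⟪(w : E), e⟫ ∂ν.toSphere :=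
    continuous_integral_toSphere_of_continuous ν (f := fun r w => f (r • w) * ⟪w, e⟫)
      (by fun_prop)
  have hderiv : Continuous fun r : ℝ => ∫ w : Metric.sphere (0 : E) 1,
      fderiv ℝ f (r • (w : E)) e ∂ν.toSphere :=
    continuous_integral_toSphere_of_continuous ν (f := fun r w => fderiv ℝ f (r • w) e)
      (hf'.comp (by fun_prop : Continuous fun p : ℝ × E => p.1 • p.2))
  rw [setIntegral_ball_eq_integral_integral_sphere ν hR.le (integrableOn_ball hf' R)]
  refine integral_eq_of_integral_sub_sq_sq_mul_eq
    (b := fun r => r ^ n * ∫ w : Metric.sphere (0 : E) 1, f (r • (w : E)) * ⟪(w : E), e⟫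
      ∂ν.toSphere) (by fun_prop) (by fun_prop) (fun S hS => ?_) hR
  have hparts := setIntegral_ball_sub_norm_sq_sq_mul_fderiv ν hf e hS.le
  rw [setIntegral_ball_eq_integral_integral_sphere ν hS.le (integrableOn_ball (by fun_prop) S),
    setIntegral_ball_eq_integral_integral_sphere ν hS.le (integrableOn_ball (by fun_prop) S)]
    at hparts
  have hnorm (r : ℝ) (w : Metric.sphere (0 : E) 1) : ‖r • (w : E)‖ ^ 2 = r ^ 2 := by
    simp [norm_smul]
  simp only [hnorm, real_inner_smul_left, mul_left_comm (f _), integral_const_mul, smul_eq_mul,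
    mul_left_comm (_ ^ (Module.finrank ℝ E - 1))] at hparts
  simpa only [smul_eq_mul, hn, mul_left_comm] using hparts

theorem setIntegral_ball_gradient_eq_integral_sphere {f : E → ℝ} (hf : ContDiff ℝ 1 f)
    {R : ℝ} (hR : 0 < R) :
    ∫ x in Metric.ball 0 R, ∇ f x ∂ν = R ^ (Module.finrank ℝ E - 1) •
      ∫ w : Metric.sphere (0 : E) 1, f (R • (w : E)) • (w : E) ∂ν.toSphere := by
  have : CompactSpace (Metric.sphere (0 : E) 1) :=
    isCompact_iff_compactSpace.mp (isCompact_sphere 0 1)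
  have hfc := hf.continuous
  have hgrad : IntegrableOn (∇ f) (Metric.ball 0 R) ν :=
    ((contDiff_one_iff_continuous_gradient.mp hf).2.continuousOn.integrableOn_compact
      (isCompact_closedBall 0 R)).mono_set Metric.ball_subset_closedBall
  have hflux : Integrable (fun w : Metric.sphere (0 : E) 1 => f (R • (w : E)) • (w : E))
      ν.toSphere :=
    Continuous.integrable_of_hasCompactSupport (by fun_prop) (.of_compactSpace _)
  refine ext_inner_left ℝ fun e => ?_
  rw [real_inner_smul_right, ← integral_inner hgrad, ← integral_inner hflux]
  simpa only [inner_gradient_right, conj_trivial, real_inner_smul_right, real_inner_comm e] using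
    setIntegral_ball_fderiv_eq_integral_sphere ν hf e hR

end DivergenceTheorem

section ParametricIntegral

variable {α E F G : Type*} [MeasurableSpace α] [NormedAddCommGroup E] [NormedSpace ℝ E]
  [NormedAddCommGroup F] [NormedAddCommGroup G] [NormedSpace ℝ G]
  {ν : Measure α}

theorem integrable_of_continuous_of_ae_mem_isCompact [TopologicalSpace α]
    [OpensMeasurableSpace α] [T2Space α] [IsFiniteMeasure ν] {K : Set α} (hK : IsCompact K)
    (hν : ∀ᵐ a ∂ν, a ∈ K) {f : α → F} (hf : Continuous f) : Integrable f ν := by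
  rw [← Measure.restrict_eq_self_of_ae_mem hν]
  exact hf.continuousOn.integrableOn_compact hK

theorem hasFDerivAt_integral_of_continuous_of_ae_mem_isCompact [TopologicalSpace α]
    [OpensMeasurableSpace α] [T2Space α] [ProperSpace E] [IsFiniteMeasure ν] {K : Set α}
    (hK : IsCompact K) (hν : ∀ᵐ a ∂ν, a ∈ K) {f : E → α → G} {f' : E → α → E →L[ℝ] G}
    (hf : ∀ x, Continuous (f x)) (hf' : Continuous (Function.uncurry f'))
    (hderiv : ∀ x a, HasFDerivAt (f · a) (f' x a) x) (x : E) :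
    HasFDerivAt (fun x => ∫ a, f x a ∂ν) (∫ a, f' x a ∂ν) x := by
  have hf_int (y : E) : Integrable (f y) ν :=
    integrable_of_continuous_of_ae_mem_isCompact hK hν (hf y)
  have hf'_int : Integrable (f' x) ν :=
    integrable_of_continuous_of_ae_mem_isCompact hK hν (hf'.comp (.prodMk_right x))
  obtain ⟨C, hC⟩ := ((isCompact_closedBall x 1).prod hK).exists_bound_of_continuousOn
    hf'.continuousOn
  refine hasFDerivAt_integral_of_dominated_of_fderiv_le (bound := fun _ => C)
    (Metric.closedBall_mem_nhds x one_pos)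
    (.of_forall fun y => (hf_int y).aestronglyMeasurable) (hf_int x)
    hf'_int.aestronglyMeasurable ?_
    (integrable_const C) (.of_forall fun a y _ => hderiv y a)
  filter_upwards [hν] with a ha y hy using hC (y, a) ⟨hy, ha⟩

theorem lipschitzWith_integral {X : Type*} [PseudoMetricSpace X] [IsProbabilityMeasure ν]
    {C : NNReal} {f : X → α → G} (hf : ∀ x, Integrable (f x) ν)
    (hlip : ∀ a, LipschitzWith C (f · a)) : LipschitzWith C fun x => ∫ a, f x a ∂ν := by
  refine LipschitzWith.of_dist_le_mul fun x y => ?_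
  rw [dist_eq_norm, ← integral_sub (hf x) (hf y)]
  simpa using norm_integral_le_of_norm_le_const (μ := ν) <|
    Filter.Eventually.of_forall fun a => (dist_eq_norm (f x a) (f y a)) ▸ (hlip a).dist_le_mul x y

end ParametricIntegral

section Smoothing

variable {E : Type*} [NormedAddCommGroup E] [InnerProductSpace ℝ E] [FiniteDimensional ℝ E]
  [MeasurableSpace E] [BorelSpace E]

theorem hasGradientAt_integral_comp_add_smul {ν : Measure E} [IsFiniteMeasure ν] {K : Set E}
    (hK : IsCompact K) (hν : ∀ᵐ v ∂ν, v ∈ K) {V : E → ℝ} (hV : ContDiff ℝ 1 V) (t : ℝ) (θ : E) :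
    HasGradientAt (fun θ => ∫ v, V (θ + t • v) ∂ν) (∫ v, ∇ V (θ + t • v) ∂ν) θ := by
  have hVc := hV.continuous
  have hV' := hV.continuous_fderiv one_ne_zero
  have hgrad := (contDiff_one_iff_continuous_gradient.mp hV).2
  have hderiv (θ v : E) : HasFDerivAt (fun θ => V (θ + t • v)) (fderiv ℝ V (θ + t • v)) θ :=
    (hasFDerivAt_comp_add_right _).mpr (hV.differentiable one_ne_zero _).hasFDerivAt
  have hF := hasFDerivAt_integral_of_continuous_of_ae_mem_isCompact hK hν
    (f := fun θ v => V (θ + t • v)) (f' := fun θ v => fderiv ℝ V (θ + t • v))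
    (fun θ => by fun_prop) (hV'.comp (by fun_prop : Continuous fun p : E × E => p.1 + t • p.2))
    hderiv θ
  refine hasGradientAt_iff_hasFDerivAt.mpr (hF.congr_fderiv ?_)
  ext e
  rw [ContinuousLinearMap.integral_apply
      (integrable_of_continuous_of_ae_mem_isCompact hK hν (by fun_prop)),
    InnerProductSpace.toDual_apply_apply, real_inner_comm,
    ← integral_inner (integrable_of_continuous_of_ae_mem_isCompact hK hν (by fun_prop))]
  simp only [inner_gradient_right, conj_trivial]

variable {d : ℕ}

instance isProbabilityMeasure_ballUniform : IsProbabilityMeasure (ballUniform d) where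
  measure_univ := by
    rw [ballUniform, Measure.smul_apply, Measure.restrict_apply_univ, smul_eq_mul]
    exact ENNReal.inv_mul_cancel (Metric.measure_closedBall_pos _ _ one_pos).ne'
      measure_closedBall_lt_top.ne

theorem ae_ballUniform_mem_closedBall : ∀ᵐ v ∂ballUniform d, v ∈ Metric.closedBall 0 1 :=
  Measure.ae_smul_measure (ae_restrict_mem measurableSet_closedBall) _

variable {G : Type*} [NormedAddCommGroup G] [NormedSpace ℝ G]

theorem integral_ballUniform (f : EuclideanSpace ℝ (Fin d) → G) :
    ∫ v, f v ∂ballUniform d =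
      (volume.real (Metric.ball (0 : EuclideanSpace ℝ (Fin d)) 1))⁻¹ •
        ∫ v in Metric.ball 0 1, f v := by
  have hball : (Metric.ball 0 1 : Set (EuclideanSpace ℝ (Fin d))) =ᵐ[volume]
      Metric.closedBall 0 1 :=
    ae_eq_of_subset_of_measure_ge Metric.ball_subset_closedBall
      (Measure.addHaar_unitClosedBall_eq_addHaar_unitBall volume).le
      measurableSet_ball.nullMeasurableSet measure_closedBall_lt_top.ne
  rw [ballUniform, integral_smul_measure, Measure.addHaar_unitClosedBall_eq_addHaar_unitBall,
    setIntegral_congr_set hball, ENNReal.toReal_inv, Measure.real]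

theorem integral_sphereUniform (f : EuclideanSpace ℝ (Fin d) → G) :
    ∫ v, f v ∂sphereUniform d =
      (d * volume.real (Metric.ball (0 : EuclideanSpace ℝ (Fin d)) 1))⁻¹ •
        ∫ w : Metric.sphere (0 : EuclideanSpace ℝ (Fin d)) 1, f w
          ∂(volume : Measure (EuclideanSpace ℝ (Fin d))).toSphere := by
  rw [sphereUniform, integral_smul_measure,
    (MeasurableEmbedding.subtype_coe Metric.isClosed_sphere.measurableSet).integral_map,
    ENNReal.toReal_inv, ← Measure.real, Measure.toSphere_real_apply_univ,
    finrank_euclideanSpace_fin]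

theorem hasGradientAt_smoothed {V : EuclideanSpace ℝ (Fin d) → ℝ} (hV : ContDiff ℝ 1 V)
    (μ : ℝ) (θ : EuclideanSpace ℝ (Fin d)) :
    HasGradientAt (smoothed d V μ) (∫ v, ∇ V (θ + μ • v) ∂ballUniform d) θ :=
  hasGradientAt_integral_comp_add_smul (isCompact_closedBall 0 1) ae_ballUniform_mem_closedBall
    hV μ θ

theorem lipschitzWith_gradient_smoothed {V : EuclideanSpace ℝ (Fin d) → ℝ}
    (hV : Differentiable ℝ V) (μ : ℝ) {C : NNReal} (hlip : LipschitzWith C (∇ V)) :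
    LipschitzWith C (∇ (smoothed d V μ)) := by
  have hgrad := hlip.continuous
  rw [gradient_eq
    (hasGradientAt_smoothed (contDiff_one_iff_continuous_gradient.mpr ⟨hV, hgrad⟩) μ)]
  refine lipschitzWith_integral (fun θ => integrable_of_continuous_of_ae_mem_isCompact
    (isCompact_closedBall 0 1) ae_ballUniform_mem_closedBall (by fun_prop)) fun v => ?_
  exact .of_dist_le_mul fun x y => by
    simpa only [dist_add_right] using hlip.dist_le_mul (x + μ • v) (y + μ • v)

theorem gradient_smoothed_eq_integral_sphereUniform (hd : 0 < d) {μ : ℝ} (hμ : μ ≠ 0)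
    {V : EuclideanSpace ℝ (Fin d) → ℝ} (hV : ContDiff ℝ 1 V) (θ : EuclideanSpace ℝ (Fin d)) :
    ∇ (smoothed d V μ) θ =
      ∫ v, ((d / μ) * (V (θ + μ • v) - V θ)) • v ∂sphereUniform d := by
  set β := volume.real (Metric.ball (0 : EuclideanSpace ℝ (Fin d)) 1)
  have hd' : (d : ℝ) ≠ 0 := by exact_mod_cast hd.ne'
  have hdiv : μ • ∫ v in Metric.ball 0 1, ∇ V (θ + μ • v) =
      ∫ w : Metric.sphere (0 : EuclideanSpace ℝ (Fin d)) 1, (V (θ + μ • w.1) - V θ) • w.1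
        ∂(volume : Measure (EuclideanSpace ℝ (Fin d))).toSphere := by
    have h := setIntegral_ball_gradient_eq_integral_sphere volume
      (f := fun v => V (θ + μ • v) - V θ) (by fun_prop) one_pos
    have hshift (v : EuclideanSpace ℝ (Fin d)) :
        ∇ (fun v => V (θ + μ • v) - V θ) v = μ • ∇ V (θ + μ • v) := by
      rw [← gradient_comp_const_add_smul, gradient, fderiv_sub_const, gradient]
    simpa only [hshift, integral_smul, one_pow, one_smul] using h
  calc ∇ (smoothed d V μ) θ
      = ∫ v, ∇ V (θ + μ • v) ∂ballUniform d := (hasGradientAt_smoothed hV μ θ).gradient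
    _ = β⁻¹ • ∫ v in Metric.ball 0 1, ∇ V (θ + μ • v) := integral_ballUniform _
    _ = (d * β)⁻¹ • (d / μ) • μ • ∫ v in Metric.ball 0 1, ∇ V (θ + μ • v) := by
        simp only [smul_smul]
        congr 1
        field_simp
    _ = (d * β)⁻¹ • ∫ w : Metric.sphere (0 : EuclideanSpace ℝ (Fin d)) 1,
          (d / μ * (V (θ + μ • w.1) - V θ)) • w.1
            ∂(volume : Measure (EuclideanSpace ℝ (Fin d))).toSphere := by
        rw [hdiv, ← integral_smul]
        simp only [smul_smul]
    _ = ∫ v, ((d / μ) * (V (θ + μ • v) - V θ)) • v ∂sphereUniform d := by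
        rw [integral_sphereUniform]

end Smoothing

theorem smoothed_gradient_eq_sphere_integral_general {d : ℕ} (hd : 0 < d) {μ : ℝ} (hμ : μ ≠ 0)
    {V : EuclideanSpace ℝ (Fin d) → ℝ} (hV : ContDiff ℝ 1 V) :
    (Differentiable ℝ (smoothed d V μ) ∧
      ∀ C : NNReal, LipschitzWith C (∇ V) → LipschitzWith C (∇ (smoothed d V μ))) ∧
    ∀ θ, ∇ (smoothed d V μ) θ =
      ∫ v, ((d / μ) * (V (θ + μ • v) - V θ)) • v ∂sphereUniform d :=
  ⟨⟨fun θ => (hasGradientAt_smoothed hV μ θ).differentiableAt,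
    fun _ => lipschitzWith_gradient_smoothed (hV.differentiable one_ne_zero) μ⟩,
    gradient_smoothed_eq_integral_sphereUniform hd hμ hV⟩

/-- Smoothed-function gradient identity (part 1 of Lemma B.1): if `V` is `L`-smooth
then so is `V_μ`, and `∇V_μ(θ) = E_{v ∼ Unif(S^{d−1})}[(d/μ)(V(θ+μv) − V(θ)) v]`. -/
theorem smoothed_gradient_eq_sphere_integral
    (d : ℕ) (hd : 0 < d) (L μ : ℝ) (hL : 0 < L) (hμ : 0 < μ)
    (V : EuclideanSpace ℝ (Fin d) → ℝ)
    (hVdiff : Differentiable ℝ V)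
    (hVlip : LipschitzWith (Real.toNNReal L) (fun θ => gradient V θ)) :
    (Differentiable ℝ (smoothed d V μ) ∧
      LipschitzWith (Real.toNNReal L) (fun θ => gradient (smoothed d V μ) θ)) ∧
    ∀ θ : EuclideanSpace ℝ (Fin d),
      gradient (smoothed d V μ) θ =
        ∫ v, (((d : ℝ) / μ) * (V (θ + μ • v) - V θ)) • v ∂(sphereUniform d) := by
  have general := smoothed_gradient_eq_sphere_integral_general hd hμ.ne'
    (contDiff_one_iff_continuous_gradient.mpr ⟨hVdiff, hVlip.continuous⟩)
  exact ⟨⟨general.1.1, general.1.2 _ hVlip⟩, general.2⟩
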